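/- arXiv:2305.19816 — 3 statements merged into one kernel-verified Lean document; each statement's English description precedes it below -/
import Mathlib

section
/- Let p be an odd prime and let n be an integer with p ≤ n < p^2, n > 4 and (n, p) ≠ (6, 3). Then the alternating group A_n has an irreducible complex character χ whose degree has p-part exactly p, i.e. p divides χ(1) but p^2 does not divide χ(1). -/
open CategoryTheory

/-!
Write `n = a p + b` with `0 ≤ b < p` and suppose `p ∤ a`. If `b > 0`, the `b`-th exterior power of
the standard representation of `Sₙ` has dimension `C(n - 1, b)`, and
`n C(n - 1, b) = (n - b) C(n, b) = a p C(n, b)` with `p ∤ C(n, b)` by Lucas' theorem. If `b = 0`,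
the representation of `Sₙ` attached to the partition `(n - 2, 2)` has dimension
`n (n - 3) / 2 = p a (n - 3) / 2`. An irreducible representation of `Sₙ` restricted to the subgroup
`Aₙ` of index two either stays irreducible or has a constituent of half the dimension, which does
not change the `p`-part because `p` is odd.

Both representations of `Sₙ` are shown to be irreducible by evaluating at one point: this functional
is invariant under the pointwise stabiliser of a few letters, it is injective on the vectors fixed
by that stabiliser, and no nonzero vector has all its translates in its kernel.
-/

section Representation

variable {K G V : Type*} [Field K] [Group G] [AddCommGroup V] [Module K V]

theorem nontrivial_subrepresentation [Nontrivial V] (ρ : Representation K G V) :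
    Nontrivial (Subrepresentation ρ) :=
  ⟨⊥, ⊤, fun h => bot_ne_top (α := Submodule K V) (congrArg Subrepresentation.toSubmodule h)⟩

/- The required vector is the average over `H` of a translate of any nonzero vector of `W`. -/
theorem exists_mem_fixed_and_apply_ne_zero {ρ : Representation K G V} {H : Subgroup G} [Finite H]
    [NeZero (Nat.card H : K)] {l : Module.Dual K V} (hl : ∀ h ∈ H, ∀ x, l (ρ h x) = l x)
    (hgen : ∀ x, (∀ g, l (ρ g x) = 0) → x = 0) {W : Subrepresentation ρ} (hW : W ≠ ⊥) :
    ∃ y ∈ W, (∀ h ∈ H, ρ h y = y) ∧ l y ≠ 0 := by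
  obtain ⟨x, hxW, hx⟩ : ∃ x ∈ W.toSubmodule, x ≠ 0 :=
    W.toSubmodule.exists_mem_ne_zero_of_ne_bot
      fun h => hW (Subrepresentation.toSubmodule_injective h)
  obtain ⟨g, hg⟩ : ∃ g, l (ρ g x) ≠ 0 := by
    contrapose! hx
    exact hgen x hx
  have : Fintype H := Fintype.ofFinite H
  have hcard : (Fintype.card H : K) ≠ 0 := by
    rw [← Nat.card_eq_fintype_card]
    exact NeZero.ne _
  refine ⟨∑ h : H, ρ h (ρ g x), ?_, fun h hh => ?_, ?_⟩
  · exact W.toSubmodule.sum_mem fun h _ =>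
      W.apply_mem_toSubmodule _ (W.apply_mem_toSubmodule g hxW)
  · rw [map_sum, ← Equiv.sum_comp (Equiv.mulLeft (⟨h, hh⟩ : H)) fun k : H => ρ k (ρ g x)]
    simp
  · rw [map_sum, Finset.sum_congr rfl fun (h : H) _ => hl h h.2 _]
    simpa using ⟨hcard, hg⟩

/- A proper nonzero subrepresentation and an invariant complement would both contain `H`-fixed
vectors with `l ≠ 0`, but by `hfix` such vectors are proportional. -/
theorem isIrreducible_of_invariant_functional [Finite G] [NeZero (Nat.card G : K)] [Nontrivial V]
    (ρ : Representation K G V) (H : Subgroup G) (l : Module.Dual K V)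
    (hl : ∀ h ∈ H, ∀ x, l (ρ h x) = l x)
    (hfix : ∀ x, (∀ h ∈ H, ρ h x = x) → l x = 0 → x = 0)
    (hgen : ∀ x, (∀ g, l (ρ g x) = 0) → x = 0) :
    ρ.IsIrreducible := by
  have : NeZero (Nat.card H : K) := ⟨fun h => NeZero.ne (Nat.card G : K) <| by
    rw [← H.card_mul_index, Nat.cast_mul, h, zero_mul]⟩
  have := nontrivial_subrepresentation ρ
  refine { eq_bot_or_eq_top := fun W => ?_ }
  by_contra! hW
  obtain ⟨W', hWW'⟩ := exists_isCompl W
  have hW' : W' ≠ ⊥ := fun h => hW.2 (eq_top_of_isCompl_bot (h ▸ hWW'))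
  obtain ⟨y, hyW, hyH, hly⟩ := exists_mem_fixed_and_apply_ne_zero hl hgen hW.1
  obtain ⟨z, hzW', hzH, hlz⟩ := exists_mem_fixed_and_apply_ne_zero hl hgen hW'
  have hyz : l z • y = l y • z := sub_eq_zero.mp <| hfix _
    (fun h hh => by simp [hyH h hh, hzH h hh]) (by simp [mul_comm])
  have hyW' : y ∈ W'.toSubmodule := by
    rw [← W'.toSubmodule.smul_mem_iff hlz, hyz]
    exact W'.toSubmodule.smul_mem _ hzW'
  have hy : y ∈ W ⊓ W' := ⟨hyW, hyW'⟩
  rw [hWW'.inf_eq_bot] at hy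
  have hy0 : y = 0 := hy
  exact hly (by rw [hy0, map_zero])

theorem isAtomic_subrepresentation [FiniteDimensional K V] (ρ : Representation K G V) :
    IsAtomic (Subrepresentation ρ) :=
  have hmono : StrictMono (Subrepresentation.toSubmodule (ρ := ρ)) := fun _ _ h => h
  isAtomic_of_orderBot_wellFounded_lt hmono.wellFoundedLT.wf

theorem isIrreducible_toRepresentation_of_isAtom {ρ : Representation K G V}
    {U : Subrepresentation ρ} (hU : IsAtom U) : U.toRepresentation.IsIrreducible := by
  have hU0 : U.toSubmodule ≠ ⊥ := fun h => hU.1 (Subrepresentation.toSubmodule_injective h)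
  have : Nontrivial U.toSubmodule := Submodule.nontrivial_iff_ne_bot.2 hU0
  have := nontrivial_subrepresentation U.toRepresentation
  refine { eq_bot_or_eq_top := fun W => ?_ }
  let image : Subrepresentation ρ :=
    { toSubmodule := W.toSubmodule.map U.toSubmodule.subtype
      apply_mem_toSubmodule := by
        rintro g _ ⟨x, hx, rfl⟩
        exact ⟨_, W.apply_mem_toSubmodule g hx, rfl⟩ }
  have hinj := Submodule.map_injective_of_injective U.toSubmodule.injective_subtype
  have himage : image ≤ U := Submodule.map_subtype_le U.toSubmodule W.toSubmodule
  refine (hU.le_iff.1 himage).imp (fun h => ?_) fun h => ?_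
  · refine Subrepresentation.toSubmodule_injective (hinj ?_)
    exact (congrArg Subrepresentation.toSubmodule h).trans (Submodule.map_bot _).symm
  · refine Subrepresentation.toSubmodule_injective (hinj ?_)
    exact (congrArg Subrepresentation.toSubmodule h).trans (Submodule.map_subtype_top _).symm

theorem eq_bot_or_eq_top_of_map_le {ρ : Representation K G V} (hρ : ρ.IsIrreducible)
    {P : Submodule K V} (hP : ∀ g, P.map (ρ g) ≤ P) : P = ⊥ ∨ P = ⊤ :=
  (hρ.eq_bot_or_eq_top ⟨P, fun g _ hx => hP g (Submodule.mem_map_of_mem hx)⟩).imp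
    (congrArg Subrepresentation.toSubmodule) (congrArg Subrepresentation.toSubmodule)

theorem finrank_eq_or_two_mul_finrank_eq_of_map_pair [FiniteDimensional K V]
    {ρ : Representation K G V} (hρ : ρ.IsIrreducible) {P Q : Submodule K V} (hP : P ≠ ⊥)
    (hPQ : Module.finrank K Q = Module.finrank K P)
    (hmap : ∀ g, (P.map (ρ g) = P ∧ Q.map (ρ g) = Q) ∨ (P.map (ρ g) = Q ∧ Q.map (ρ g) = P)) :
    Module.finrank K P = Module.finrank K V ∨ 2 * Module.finrank K P = Module.finrank K V := by
  have hsup (g : G) : (P ⊔ Q).map (ρ g) ≤ P ⊔ Q := by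
    rw [Submodule.map_sup]
    rcases hmap g with ⟨hPg, hQg⟩ | ⟨hPg, hQg⟩
    · rw [hPg, hQg]
    · rw [hPg, hQg, sup_comm]
  have hinf (g : G) : (P ⊓ Q).map (ρ g) ≤ P ⊓ Q := by
    refine (Submodule.map_inf_le _).trans ?_
    rcases hmap g with ⟨hPg, hQg⟩ | ⟨hPg, hQg⟩
    · rw [hPg, hQg]
    · rw [hPg, hQg, inf_comm]
  have htop : P ⊔ Q = ⊤ := (eq_bot_or_eq_top_of_map_le hρ hsup).resolve_left fun h =>
    hP (sup_eq_bot_iff.1 h).1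
  have hrank := Submodule.finrank_sup_add_finrank_inf_eq P Q
  rw [htop, finrank_top, hPQ] at hrank
  rcases eq_bot_or_eq_top_of_map_le hρ hinf with hbot | htop'
  · rw [hbot, finrank_bot] at hrank
    omega
  · rw [htop', finrank_top] at hrank
    omega

section IndexTwo

variable {H : Subgroup G} {ρ : Representation K G V}

theorem map_toSubmodule_of_mem (U : Subrepresentation (ρ.comp H.subtype)) {g : G} (hg : g ∈ H) :
    U.toSubmodule.map (ρ g) = U.toSubmodule := by
  refine le_antisymm ?_ fun x hx => ⟨ρ g⁻¹ x, ?_, ρ.self_inv_apply g x⟩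
  · rintro _ ⟨x, hx, rfl⟩
    exact U.apply_mem_toSubmodule ⟨g, hg⟩ hx
  · exact U.apply_mem_toSubmodule ⟨g⁻¹, inv_mem hg⟩ hx

theorem map_map_eq_map_mul (P : Submodule K V) (g h : G) :
    (P.map (ρ h)).map (ρ g) = P.map (ρ (g * h)) := by
  rw [map_mul, Module.End.mul_eq_comp, Submodule.map_comp]

theorem map_toSubmodule_of_notMem (hH : H.index = 2) (U : Subrepresentation (ρ.comp H.subtype))
    {s g : G} (hs : s ∉ H) (hg : g ∉ H) :
    U.toSubmodule.map (ρ g) = U.toSubmodule.map (ρ s) := by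
  have hsg : s⁻¹ * g ∈ H := by
    simp [Subgroup.mul_mem_iff_of_index_two hH, hs, hg]
  calc
    U.toSubmodule.map (ρ g) = (U.toSubmodule.map (ρ (s⁻¹ * g))).map (ρ s) := by
      rw [map_map_eq_map_mul, mul_inv_cancel_left]
    _ = U.toSubmodule.map (ρ s) := by rw [map_toSubmodule_of_mem U hsg]

theorem map_pair_of_index_eq_two (hH : H.index = 2) (U : Subrepresentation (ρ.comp H.subtype))
    {s : G} (hs : s ∉ H) (g : G) :
    (U.toSubmodule.map (ρ g) = U.toSubmodule ∧
      (U.toSubmodule.map (ρ s)).map (ρ g) = U.toSubmodule.map (ρ s)) ∨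
    (U.toSubmodule.map (ρ g) = U.toSubmodule.map (ρ s) ∧
      (U.toSubmodule.map (ρ s)).map (ρ g) = U.toSubmodule) := by
  rw [map_map_eq_map_mul]
  by_cases hg : g ∈ H
  · have hgs : g * s ∉ H := by simp [Subgroup.mul_mem_iff_of_index_two hH, hg, hs]
    exact .inl ⟨map_toSubmodule_of_mem U hg, map_toSubmodule_of_notMem hH U hs hgs⟩
  · have hgs : g * s ∈ H := by simp [Subgroup.mul_mem_iff_of_index_two hH, hg, hs]
    exact .inr ⟨map_toSubmodule_of_notMem hH U hs hg, map_toSubmodule_of_mem U hgs⟩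

theorem exists_isIrreducible_finrank_eq_or_two_mul_finrank_eq [FiniteDimensional K V]
    (hH : H.index = 2) (hρ : ρ.IsIrreducible) :
    ∃ U : Subrepresentation (ρ.comp H.subtype), U.toRepresentation.IsIrreducible ∧
      (Module.finrank K U.toSubmodule = Module.finrank K V ∨
        2 * Module.finrank K U.toSubmodule = Module.finrank K V) := by
  have htop : (⊤ : Subrepresentation (ρ.comp H.subtype)) ≠ ⊥ := fun h =>
    top_ne_bot (α := Subrepresentation ρ) <| Subrepresentation.toSubmodule_injective
      (congrArg Subrepresentation.toSubmodule h : (⊤ : Submodule K V) = ⊥)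
  obtain ⟨U, hU, -⟩ := ((isAtomic_subrepresentation
    (ρ.comp H.subtype)).eq_bot_or_exists_atom_le ⊤).resolve_left htop
  have hU0 : U.toSubmodule ≠ ⊥ := fun h => hU.1 (Subrepresentation.toSubmodule_injective h)
  obtain ⟨s, hs⟩ : ∃ s, s ∉ H := by
    by_contra! h
    simp [(Subgroup.eq_top_iff' H).2 h] at hH
  have hrank : Module.finrank K (U.toSubmodule.map (ρ s)) = Module.finrank K U.toSubmodule :=
    (Submodule.equivMapOfInjective (ρ s) (ρ.apply_bijective s).injective _).finrank_eq.symm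
  exact ⟨U, isIrreducible_toRepresentation_of_isAtom hU,
    finrank_eq_or_two_mul_finrank_eq_of_map_pair hρ hU0 hrank
      (map_pair_of_index_eq_two hH U hs)⟩

end IndexTwo

end Representation

theorem simple_fdRepOf_of_isIrreducible.{u} {K V : Type u} {G : Type*} [Field K] [Group G]
    [AddCommGroup V] [Module K V] [FiniteDimensional K V] (ρ : Representation K G V)
    (hρ : ρ.IsIrreducible) : Simple (FDRep.of ρ) := by
  have : IsSimpleModule (MonoidAlgebra K G) ρ.asModule :=
    ρ.irreducible_iff_isSimpleModule_asModule.1 hρ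
  have : Simple ((forget₂ (FDRep K G) (Rep K G) ⋙ Rep.toModuleMonoidAlgebra).obj (FDRep.of ρ)) :=
    simple_of_isSimpleModule (R := MonoidAlgebra K G) (M := ρ.asModule)
  exact Functor.simple_of_simple_obj (forget₂ (FDRep K G) (Rep K G) ⋙ Rep.toModuleMonoidAlgebra) _

section Arithmetic

variable {p : ℕ}

theorem dvd_and_not_sq_dvd_of_mul_eq {c d m : ℕ} (hp : p.Prime) (hc : ¬p ∣ c) (hm : ¬p ∣ m)
    (h : c * d = p * m) : p ∣ d ∧ ¬p ^ 2 ∣ d := by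
  refine ⟨(hp.dvd_mul.1 (Dvd.intro m h.symm)).resolve_left hc, fun hd => hm ?_⟩
  apply Nat.dvd_of_mul_dvd_mul_left hp.pos
  rw [← h, ← pow_two]
  exact hd.mul_left c

theorem not_dvd_choose_mod {n : ℕ} (hp : p.Prime) : ¬p ∣ n.choose (n % p) := by
  have : Fact p.Prime := ⟨hp⟩
  have hlucas : n.choose (n % p) ≡ 1 [MOD p] := by
    simpa [Nat.div_eq_of_lt (Nat.mod_lt n hp.pos)] using
      Choose.choose_modEq_choose_mod_mul_choose_div_nat (p := p) (n := n) (k := n % p)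
  rw [hlucas.dvd_iff dvd_rfl]
  exact hp.not_dvd_one

theorem dvd_and_not_sq_dvd_choose_pred_mod {n : ℕ} (hp : p.Prime) (hn : ¬p ∣ n)
    (hdiv : ¬p ∣ n / p) : p ∣ (n - 1).choose (n % p) ∧ ¬p ^ 2 ∣ (n - 1).choose (n % p) := by
  obtain ⟨m, rfl⟩ : ∃ m, n = m + 1 := Nat.exists_eq_succ_of_ne_zero (by rintro rfl; simp at hn)
  refine dvd_and_not_sq_dvd_of_mul_eq hp hn
    (hp.not_dvd_mul hdiv (not_dvd_choose_mod (n := m + 1) hp)) ?_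
  have hsub : m + 1 - (m + 1) % p = p * ((m + 1) / p) := by
    have := Nat.div_add_mod (m + 1) p
    omega
  rw [Nat.add_sub_cancel, mul_comm, Nat.choose_mul_succ_eq, hsub]
  ring

theorem not_dvd_two_of_odd (hp : p.Prime) (hodd : Odd p) : ¬p ∣ 2 := by
  rw [Nat.prime_dvd_prime_iff_eq hp Nat.prime_two]
  exact hodd.ne_two_of_dvd_nat dvd_rfl

theorem dvd_and_not_sq_dvd_of_two_mul_eq {n d : ℕ} (hp : p.Prime) (hodd : Odd p) (hp3 : p ≠ 3)
    (hn3 : 3 ≤ n) (hn : p ∣ n) (hdiv : ¬p ∣ n / p) (hd : 2 * d = n * (n - 3)) :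
    p ∣ d ∧ ¬p ^ 2 ∣ d := by
  have hsub : ¬p ∣ n - 3 := by
    rw [Nat.dvd_sub_iff_right hn3 hn, Nat.prime_dvd_prime_iff_eq hp Nat.prime_three]
    exact hp3
  refine dvd_and_not_sq_dvd_of_mul_eq hp (not_dvd_two_of_odd hp hodd) (hp.not_dvd_mul hdiv hsub) ?_
  rw [hd, ← mul_assoc, Nat.mul_div_cancel' hn]

end Arithmetic

section AlternatingGroup

variable {α : Type*} [Fintype α] [DecidableEq α] [Nontrivial α]

theorem exists_simple_fdRep_alternatingGroup.{u} {K V : Type u} [Field K] [AddCommGroup V]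
    [Module K V] [FiniteDimensional K V] {ρ : Representation K (Equiv.Perm α) V}
    (hρ : ρ.IsIrreducible) {p : ℕ} (hp : p.Prime) (hodd : Odd p)
    (hdvd : p ∣ Module.finrank K V ∧ ¬p ^ 2 ∣ Module.finrank K V) :
    ∃ W : FDRep K (alternatingGroup α),
      Simple W ∧ p ∣ Module.finrank K W ∧ ¬p ^ 2 ∣ Module.finrank K W := by
  obtain ⟨U, hU, hrank⟩ :=
    exists_isIrreducible_finrank_eq_or_two_mul_finrank_eq alternatingGroup.index_eq_two hρ
  refine ⟨FDRep.of U.toRepresentation, simple_fdRepOf_of_isIrreducible _ hU, ?_⟩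
  change p ∣ Module.finrank K U.toSubmodule ∧ ¬p ^ 2 ∣ Module.finrank K U.toSubmodule
  rcases hrank with hrank | hrank
  · rwa [hrank]
  · rw [← hrank] at hdvd
    exact ⟨(hp.dvd_mul.1 hdvd.1).resolve_left (not_dvd_two_of_odd hp hodd),
      fun h => hdvd.2 (h.mul_left 2)⟩

end AlternatingGroup

theorem eq_zero_of_sum_eq_zero_of_forall_eq_zero_or_eq {ι M : Type*} [Fintype ι] [AddCommMonoid M]
    [IsAddTorsionFree M] {φ : ι → M} {i : ι} (hφ : ∀ t, φ t = 0 ∨ φ t = φ i)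
    (hsum : ∑ t, φ t = 0) : φ i = 0 := by
  classical
  by_contra hi
  have hite (t : ι) : φ t = if φ t = φ i then φ i else 0 := by
    rcases hφ t with ht | ht
    · rw [ht, if_neg (Ne.symm hi)]
    · rw [ht, if_pos rfl]
  rw [Finset.sum_congr rfl fun t _ => hite t, ← Finset.sum_filter, Finset.sum_const] at hsum
  exact hi ((nsmul_eq_zero_iff_right (Finset.card_ne_zero_of_mem (a := i) (by simp))).1 hsum)

theorem swap_mem_fixingSubgroup {α : Type*} [DecidableEq α] {S : Set α} {a b : α} (ha : a ∉ S)
    (hb : b ∉ S) : Equiv.swap a b ∈ fixingSubgroup (Equiv.Perm α) S :=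
  (mem_fixingSubgroup_iff _).2 fun _ hx => Equiv.swap_apply_of_ne_of_ne
    (ne_of_mem_of_not_mem hx ha) (ne_of_mem_of_not_mem hx hb)

section AlternatingForms

variable {K M : Type*} [Field K] [AddCommGroup M] [Module K M]

instance finiteDimensional_alternatingMap [FiniteDimensional K M] (k : ℕ) :
    FiniteDimensional K (M [⋀^Fin k]→ₗ[K] K) :=
  Module.Finite.equiv (exteriorPower.alternatingMapLinearEquiv (R := K) (M := M)).symm

theorem finrank_alternatingMap [FiniteDimensional K M] (k : ℕ) :
    Module.finrank K (M [⋀^Fin k]→ₗ[K] K) = (Module.finrank K M).choose k := by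
  rw [(exteriorPower.alternatingMapLinearEquiv (R := K) (M := M)).finrank_eq,
    ← exteriorPower.finrank_eq (R := K) (M := M)]
  exact Subspace.dual_finrank_eq

/-- The natural action of `G` on the alternating `k`-forms on a representation `ρ`, dual to its
`k`-th exterior power. -/
def alternatingFormRep {G : Type*} [Group G] (ρ : Representation K G M) (k : ℕ) :
    Representation K G (M [⋀^Fin k]→ₗ[K] K) where
  toFun g :=
    { toFun f := f.compLinearMap (ρ g⁻¹)
      map_add' _ _ := rfl
      map_smul' _ _ := rfl }
  map_one' := by ext; simp
  map_mul' g h := by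
    simp only [mul_inv_rev, map_mul]
    rfl

theorem alternatingFormRep_apply {G : Type*} [Group G] (ρ : Representation K G M) {k : ℕ} (g : G)
    (f : M [⋀^Fin k]→ₗ[K] K) (v : Fin k → M) :
    alternatingFormRep ρ k g f v = f (ρ g⁻¹ ∘ v) :=
  rfl

variable {α : Type*} {e : α → M} {k : ℕ}

theorem alternatingMap_eq_zero_of_span_eq_top (he : Submodule.span K (Set.range e) = ⊤)
    {f : M [⋀^Fin k]→ₗ[K] K} (hf : ∀ s : Fin k → α, Function.Injective s → f (e ∘ s) = 0) :
    f = 0 := by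
  have hsurj : Function.Surjective (Finsupp.linearCombination K e) := by
    rw [← LinearMap.range_eq_top, Finsupp.range_linearCombination, he]
  apply AlternatingMap.compLinearMap_injective (Finsupp.linearCombination K e) hsurj
  refine Module.Basis.ext_alternating Finsupp.basisSingleOne fun s hs => ?_
  simpa [Function.comp_def] using hf s hs

theorem alternatingMap_comp_eq_zero_of_mem_range {f : M [⋀^Fin k]→ₗ[K] K} {c s : Fin k → α}
    (hc : f (e ∘ c) = 0) (hs : ∀ i, s i ∈ Set.range c) : f (e ∘ s) = 0 := by
  choose τ hτ using hs
  obtain rfl : c ∘ τ = s := funext hτ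
  by_cases hinj : Function.Injective τ
  · have hperm := f.map_perm (e ∘ c) (Equiv.ofBijective τ (Finite.injective_iff_bijective.1 hinj))
    rwa [hc, smul_zero] at hperm
  · exact f.map_eq_zero_of_not_injective _ fun h => hinj (h.of_comp (f := e ∘ c))

theorem alternatingMap_comp_eq_zero_of_swap_invariant [DecidableEq α] [NeZero (2 : K)]
    {f : M [⋀^Fin k]→ₗ[K] K} {s : Fin k → α} (hs : Function.Injective s) {i j : Fin k} (hij : i ≠ j)
    (hswap : f (e ∘ Equiv.swap (s i) (s j) ∘ s) = f (e ∘ s)) : f (e ∘ s) = 0 := by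
  have hneg := f.map_swap (e ∘ s) hij
  rw [Function.comp_assoc, ← hs.swap_comp, hswap] at hneg
  simpa [two_ne_zero] using two_mul (f (e ∘ s)) |>.trans (eq_neg_iff_add_eq_zero.1 hneg)

theorem alternatingMap_comp_eq_zero_of_sum_eq_zero [DecidableEq α] [Fintype α] [CharZero K]
    (hsum : ∑ a, e a = 0) {f : M [⋀^Fin k]→ₗ[K] K} {S : Set α}
    (hS : ∀ s : Fin k → α, (∀ i, s i ∈ S) → f (e ∘ s) = 0)
    (hswap : ∀ a ∉ S, ∀ b ∉ S, ∀ s : Fin k → α, f (e ∘ Equiv.swap a b ∘ s) = f (e ∘ s))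
    {s : Fin k → α} (hs : Function.Injective s) {i : Fin k} (hi : s i ∉ S)
    (hne : ∀ j ≠ i, s j ∈ S) : f (e ∘ s) = 0 := by
  rw [← Function.update_eq_self i s]
  refine eq_zero_of_sum_eq_zero_of_forall_eq_zero_or_eq
    (φ := fun t => f (e ∘ Function.update s i t)) (i := s i) (fun t => ?_) ?_
  · by_cases ht : t ∈ S
    · refine .inl (hS _ ((Function.forall_update_iff s (p := fun _ a => a ∈ S)).2 ⟨ht, hne⟩))
    · right
      rw [Function.update_eq_self, ← hswap (s i) hi t ht s]
      have hupdate : Function.update s i t = Equiv.swap (s i) t ∘ s := by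
        refine (Function.update_eq_iff).2 ⟨by simp, fun l hl => ?_⟩
        rw [Function.comp_apply, Equiv.swap_apply_of_ne_of_ne (hs.ne hl)
          (ne_of_mem_of_not_mem (hne l hl) ht)]
      rw [hupdate]
  · simp only [Function.comp_update]
    rw [← AlternatingMap.map_update_sum, hsum, f.map_update_zero]

variable {ρ : Representation K (Equiv.Perm α) M}

theorem alternatingFormRep_apply_comp (hρ : ∀ g a, ρ g (e a) = e (g a)) (g : Equiv.Perm α)
    (f : M [⋀^Fin k]→ₗ[K] K) (s : Fin k → α) :
    alternatingFormRep ρ k g f (e ∘ s) = f (e ∘ ⇑g⁻¹ ∘ s) := by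
  rw [alternatingFormRep_apply]
  exact congrArg f (funext fun i => hρ g⁻¹ (s i))

variable [Fintype α] [CharZero K]

theorem alternatingMap_eq_zero_of_fixed (hρ : ∀ g a, ρ g (e a) = e (g a))
    (hspan : Submodule.span K (Set.range e) = ⊤) (hsum : ∑ a, e a = 0) {c : Fin k → α}
    {f : M [⋀^Fin k]→ₗ[K] K}
    (hfix : ∀ h ∈ fixingSubgroup (Equiv.Perm α) (Set.range c), alternatingFormRep ρ k h f = f)
    (hf : f (e ∘ c) = 0) : f = 0 := by
  classical
  have hrange (s : Fin k → α) (hs : ∀ i, s i ∈ Set.range c) : f (e ∘ s) = 0 :=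
    alternatingMap_comp_eq_zero_of_mem_range hf hs
  have hswap (a) (ha : a ∉ Set.range c) (b) (hb : b ∉ Set.range c) (s : Fin k → α) :
      f (e ∘ Equiv.swap a b ∘ s) = f (e ∘ s) := by
    rw [← Equiv.swap_inv, ← alternatingFormRep_apply_comp hρ,
      hfix _ (swap_mem_fixingSubgroup ha hb)]
  refine alternatingMap_eq_zero_of_span_eq_top hspan fun s hs => ?_
  by_cases hmem : ∀ i, s i ∈ Set.range c
  · exact hrange s hmem
  obtain ⟨i, hi⟩ := not_forall.1 hmem
  by_cases hne : ∀ j ≠ i, s j ∈ Set.range c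
  · exact alternatingMap_comp_eq_zero_of_sum_eq_zero hsum hrange hswap hs hi hne
  · obtain ⟨j, hji, hj⟩ : ∃ j ≠ i, s j ∉ Set.range c := by simpa using hne
    exact alternatingMap_comp_eq_zero_of_swap_invariant hs hji (hswap _ hj _ hi s)

theorem isIrreducible_alternatingFormRep [Nontrivial (M [⋀^Fin k]→ₗ[K] K)]
    (hρ : ∀ g a, ρ g (e a) = e (g a)) (hspan : Submodule.span K (Set.range e) = ⊤)
    (hsum : ∑ a, e a = 0) (hk : k ≤ Fintype.card α) :
    (alternatingFormRep ρ k).IsIrreducible := by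
  obtain ⟨c⟩ : Nonempty (Fin k ↪ α) := Function.Embedding.nonempty_of_card_le (by simpa using hk)
  let evalAt : Module.Dual K (M [⋀^Fin k]→ₗ[K] K) :=
    { toFun f := f (e ∘ c)
      map_add' _ _ := rfl
      map_smul' _ _ := rfl }
  refine isIrreducible_of_invariant_functional _
    (fixingSubgroup (Equiv.Perm α) (Set.range c)) evalAt (fun h hh f => ?_)
    (fun f hfix hf => alternatingMap_eq_zero_of_fixed hρ hspan hsum hfix hf) fun f hf =>
      alternatingMap_eq_zero_of_span_eq_top hspan fun s hs => ?_
  · have hc : ⇑h⁻¹ ∘ c = c :=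
      funext fun i => (mem_fixingSubgroup_iff _).1 (inv_mem hh) (c i) (Set.mem_range_self i)
    exact (alternatingFormRep_apply_comp hρ h f c).trans (by rw [hc]; rfl)
  · obtain ⟨g, hg⟩ := Equiv.Perm.exists_extending_pair c s c.injective hs
    have hgc : ⇑(g⁻¹)⁻¹ ∘ c = s := by rw [inv_inv]; exact funext hg
    rw [← hgc, ← alternatingFormRep_apply_comp hρ]
    exact hf g⁻¹

end AlternatingForms

section Standard

variable (K α : Type*) [Field K]

/-- The permutation action on the functions `α → K`, by `(g • f) a = f (g⁻¹ a)`. -/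
def permutationRep : Representation K (Equiv.Perm α) (α → K) where
  toFun g := LinearMap.funLeft K K ⇑g⁻¹
  map_one' := rfl
  map_mul' _ _ := by rw [mul_inv_rev]; rfl

/-- The space of the standard representation: functions on `α` modulo constants. -/
abbrev StandardModule : Type _ :=
  (α → K) ⧸ Submodule.span K {(1 : α → K)}

/-- The standard representation of the symmetric group, of dimension `Fintype.card α - 1`. -/
def standardRep : Representation K (Equiv.Perm α) (StandardModule K α) :=
  (permutationRep K α).quotient _ fun g => by
    rw [Submodule.span_singleton_le_iff_mem]
    exact Submodule.mem_span_singleton_self (1 : α → K)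

theorem finrank_standardModule [Fintype α] [Nonempty α] :
    Module.finrank K (StandardModule K α) = Fintype.card α - 1 := by
  rw [Submodule.finrank_quotient, finrank_span_singleton one_ne_zero,
    Module.finrank_fintype_fun_eq_card]

variable {K α}

open scoped Classical in
/-- The image of the indicator function of `a` in the standard representation. -/
noncomputable def standardVec (a : α) : StandardModule K α :=
  Submodule.Quotient.mk (Pi.single a 1)

theorem standardRep_standardVec (g : Equiv.Perm α) (a : α) :
    standardRep K α g (standardVec a) = standardVec (g a) := by
  classical
  refine congrArg Submodule.Quotient.mk (funext fun b => ?_)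
  change (Pi.single a 1 : α → K) (g⁻¹ b) = (Pi.single (g a) 1 : α → K) b
  simp only [Pi.single_apply, Equiv.Perm.inv_eq_iff_eq]

theorem sum_standardVec [Fintype α] : ∑ a : α, standardVec (K := K) a = 0 := by
  classical
  calc
    ∑ a : α, standardVec (K := K) a =
        (Submodule.span K {(1 : α → K)}).mkQ (∑ a, Pi.single a ((1 : α → K) a)) := by
      rw [map_sum]
      rfl
    _ = 0 := by
      rw [Finset.univ_sum_single, Submodule.mkQ_apply, Submodule.Quotient.mk_eq_zero]
      exact Submodule.mem_span_singleton_self _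

theorem span_range_standardVec [Finite α] :
    Submodule.span K (Set.range (standardVec (K := K) (α := α))) = ⊤ := by
  classical
  have hrange : Set.range (standardVec (K := K) (α := α)) =
      (Submodule.span K {(1 : α → K)}).mkQ '' Set.range (Pi.basisFun K α) := by
    rw [← Set.range_comp]
    refine congrArg Set.range (funext fun a => ?_)
    simp [standardVec]
  rw [hrange, Submodule.span_image, (Pi.basisFun K α).span_eq, Submodule.map_top,
    Submodule.range_mkQ]

theorem isIrreducible_alternatingFormRep_standardRep [Fintype α] [CharZero K] {k : ℕ}
    (hk : k < Fintype.card α) : (alternatingFormRep (standardRep K α) k).IsIrreducible := by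
  have : Nonempty α := Fintype.card_pos_iff.1 (Nat.zero_lt_of_lt hk)
  have : Nontrivial (StandardModule K α [⋀^Fin k]→ₗ[K] K) := by
    apply Module.nontrivial_of_finrank_pos (R := K)
    rw [finrank_alternatingMap, finrank_standardModule]
    exact Nat.choose_pos (Nat.le_sub_one_of_lt hk)
  exact isIrreducible_alternatingFormRep standardRep_standardVec span_range_standardVec
    sum_standardVec hk.le

end Standard

section TwoRow

variable (K α : Type*) [Field K]

/-- The permutation action on the functions on unordered pairs (with repetition) of points. -/
def sym2Rep : Representation K (Equiv.Perm α) (Sym2 α → K) where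
  toFun g := LinearMap.funLeft K K (Sym2.map ⇑g⁻¹)
  map_one' := by
    ext
    simp [LinearMap.funLeft_apply]
  map_mul' g h := by
    rw [mul_inv_rev, Equiv.Perm.coe_mul, Sym2.map_comp]
    rfl

variable {K α} in
theorem sym2Rep_apply (g : Equiv.Perm α) (F : Sym2 α → K) (a b : α) :
    sym2Rep K α g F s(a, b) = F s(g⁻¹ a, g⁻¹ b) :=
  rfl

variable [Fintype α]

/-- Sends a function on unordered pairs, seen as a symmetric matrix, to its diagonal and its row
sums. -/
def diagRowSum : (Sym2 α → K) →ₗ[K] (α → K) × (α → K) where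
  toFun F := (fun a => F s(a, a), fun a => ∑ b, F s(a, b))
  map_add' _ _ := by ext <;> simp [Finset.sum_add_distrib]
  map_smul' _ _ := by ext <;> simp [Finset.mul_sum]

variable {K α}

theorem mem_ker_diagRowSum {F : Sym2 α → K} :
    F ∈ (diagRowSum K α).ker ↔ (∀ a, F s(a, a) = 0) ∧ ∀ a, ∑ b, F s(a, b) = 0 := by
  simp [diagRowSum, LinearMap.mem_ker, funext_iff]

variable (K α) in
/-- The space of symmetric matrices with zero diagonal and zero row sums, a model of the Specht
module of the partition `(n - 2, 2)` where `n = Fintype.card α`. -/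
def twoRowSubrepresentation : Subrepresentation (sym2Rep K α) where
  toSubmodule := (diagRowSum K α).ker
  apply_mem_toSubmodule g F hF := by
    obtain ⟨hdiag, hrow⟩ := mem_ker_diagRowSum.1 hF
    refine mem_ker_diagRowSum.2 ⟨fun a => hdiag _, fun a => ?_⟩
    simp only [sym2Rep_apply]
    rw [Equiv.sum_comp g⁻¹ fun b => F s(g⁻¹ a, b), hrow]

theorem exists_forall_mul_add_sum_eq {c : K} (hc : c ≠ 0) (hcard : c + Fintype.card α ≠ 0)
    (r : α → K) : ∃ x : α → K, ∀ a, c * x a + ∑ b, x b = r a := by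
  refine ⟨fun a => (r a - (∑ b, r b) / (c + Fintype.card α)) / c, fun a => ?_⟩
  rw [← Finset.sum_div, Finset.sum_sub_distrib, Finset.sum_const, Finset.card_univ, nsmul_eq_mul]
  field_simp
  ring

variable [CharZero K]

theorem diagRowSum_surjective (hα : 3 ≤ Fintype.card α) :
    Function.Surjective (diagRowSum K α) := by
  classical
  rintro ⟨d, r⟩
  obtain ⟨m, hm⟩ := Nat.exists_eq_add_of_le' hα
  have hcard : (Fintype.card α : K) = m + 3 := by rw [hm]; push_cast; rfl
  obtain ⟨x, hx⟩ := exists_forall_mul_add_sum_eq (α := α) (c := (m + 1 : K)) (by norm_cast)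
    (by rw [hcard]; norm_cast) (r - d)
  let F : Sym2 α → K := Sym2.lift ⟨fun a b => if a = b then d a else x a + x b, fun a b => by
    rcases eq_or_ne a b with rfl | hab
    · rfl
    · simp [hab, hab.symm, add_comm]⟩
  have hF (a b : α) : F s(a, b) = x a + x b + if a = b then d a - 2 * x a else 0 := by
    rcases eq_or_ne a b with rfl | hab
    · simp only [F, Sym2.lift_mk, if_true]
      ring
    · simp [F, hab]
  refine ⟨F, Prod.ext (funext fun a => ?_) (funext fun a => ?_)⟩
  · simp [diagRowSum, F]
  · have hxa : (m + 1) * x a + ∑ b, x b = r a - d a := hx a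
    simp only [diagRowSum, LinearMap.coe_mk, AddHom.coe_mk, hF, Finset.sum_add_distrib,
      Finset.sum_const, Finset.card_univ, nsmul_eq_mul, hcard, Finset.sum_ite_eq,
      Finset.mem_univ, if_true]
    linear_combination hxa

theorem two_mul_finrank_twoRowSubrepresentation (hα : 3 ≤ Fintype.card α) :
    2 * Module.finrank K (twoRowSubrepresentation K α).toSubmodule =
      Fintype.card α * (Fintype.card α - 3) := by
  change 2 * Module.finrank K (diagRowSum K α).ker = _
  have hrank := (diagRowSum K α).finrank_range_add_finrank_ker
  rw [LinearMap.range_eq_top.2 (diagRowSum_surjective hα), finrank_top, Module.finrank_prod,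
    Module.finrank_fintype_fun_eq_card, Module.finrank_fintype_fun_eq_card, Sym2.card] at hrank
  have hchoose := Nat.add_one_mul_choose_eq (Fintype.card α) 1
  rw [Nat.choose_one_right, ← hrank] at hchoose
  obtain ⟨m, hm⟩ := Nat.exists_eq_add_of_le' hα
  rw [hm] at hchoose ⊢
  rw [Nat.add_sub_cancel]
  linarith

theorem row_eq_zero_of_swap_invariant [DecidableEq α] {F : Sym2 α → K} {S : Set α}
    (hswap : ∀ a ∉ S, ∀ b ∉ S, ∀ i j, F s(Equiv.swap a b i, Equiv.swap a b j) = F s(i, j)) {q : α}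
    (hdiag : F s(q, q) = 0) (hrow : ∑ t, F s(q, t) = 0) (hS : ∀ t ∈ S, F s(q, t) = 0) (r : α) :
    F s(q, r) = 0 := by
  by_cases hrS : r ∈ S
  · exact hS r hrS
  rcases eq_or_ne q r with rfl | hqr
  · exact hdiag
  refine eq_zero_of_sum_eq_zero_of_forall_eq_zero_or_eq (φ := fun t => F s(q, t)) (fun t => ?_) hrow
  by_cases htS : t ∈ S
  · exact .inl (hS t htS)
  rcases eq_or_ne q t with rfl | hqt
  · exact .inl hdiag
  · right
    simpa [Equiv.swap_apply_of_ne_of_ne hqr hqt] using hswap r hrS t htS q r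

theorem eq_zero_of_mem_ker_diagRowSum_of_fixed {F : Sym2 α → K} (hF : F ∈ (diagRowSum K α).ker)
    {a b : α} (hfix : ∀ h ∈ fixingSubgroup (Equiv.Perm α) {a, b}, sym2Rep K α h F = F)
    (hab : F s(a, b) = 0) : F = 0 := by
  classical
  obtain ⟨hdiag, hrow⟩ := mem_ker_diagRowSum.1 hF
  have hswap (r) (hr : r ∉ ({a, b} : Set α)) (t) (ht : t ∉ ({a, b} : Set α)) (i j : α) :
      F s(Equiv.swap r t i, Equiv.swap r t j) = F s(i, j) := by
    rw [← Equiv.swap_inv, ← sym2Rep_apply _ F, hfix _ (swap_mem_fixingSubgroup hr ht)]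
  have hrowEq {q : α} (hqa : F s(q, a) = 0) (hqb : F s(q, b) = 0) (r : α) : F s(q, r) = 0 :=
    row_eq_zero_of_swap_invariant hswap (hdiag q) (hrow q) (by simp [hqa, hqb]) r
  have ha : ∀ r, F s(a, r) = 0 := hrowEq (hdiag a) hab
  have hb : ∀ r, F s(b, r) = 0 := hrowEq (Sym2.eq_swap ▸ hab) (hdiag b)
  refine funext (Sym2.ind fun q r => ?_)
  exact hrowEq (Sym2.eq_swap ▸ ha q) (Sym2.eq_swap ▸ hb q) r

theorem isIrreducible_twoRowSubrepresentation (hα : 4 ≤ Fintype.card α) :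
    (twoRowSubrepresentation K α).toRepresentation.IsIrreducible := by
  have : Nontrivial (twoRowSubrepresentation K α).toSubmodule := by
    apply Module.nontrivial_of_finrank_pos (R := K)
    have hrank := two_mul_finrank_twoRowSubrepresentation (K := K) (α := α) (by omega)
    have hpos : 0 < Fintype.card α * (Fintype.card α - 3) := Nat.mul_pos (by omega) (by omega)
    omega
  obtain ⟨a, b, hab⟩ := Fintype.exists_pair_of_one_lt_card (α := α) (by omega)
  refine isIrreducible_of_invariant_functional _ (fixingSubgroup (Equiv.Perm α) {a, b})
    (LinearMap.proj s(a, b) ∘ₗ (twoRowSubrepresentation K α).toSubmodule.subtype)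
    (fun h hh F => ?_) (fun F hfix hF => Subtype.ext ?_) fun F hF => Subtype.ext ?_
  · have hfix := (mem_fixingSubgroup_iff _).1 (inv_mem hh)
    change F.1 s(h⁻¹ a, h⁻¹ b) = F.1 s(a, b)
    rw [show h⁻¹ a = a from hfix a (by simp), show h⁻¹ b = b from hfix b (by simp)]
  · exact eq_zero_of_mem_ker_diagRowSum_of_fixed F.2
      (fun h hh => congrArg Subtype.val (hfix h hh)) hF
  · refine funext (Sym2.ind fun q r => ?_)
    rcases eq_or_ne q r with rfl | hqr
    · exact (mem_ker_diagRowSum.1 F.2).1 q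
    obtain ⟨g, hga, hgb⟩ := MulAction.is_two_pretransitive_iff.1
      (Equiv.Perm.isMultiplyPretransitive α 2) hab hqr
    have hg : F.1 s((g⁻¹)⁻¹ a, (g⁻¹)⁻¹ b) = 0 := hF g⁻¹
    rw [inv_inv] at hg
    rwa [← hga, ← hgb]

end TwoRow

theorem alternating_char_p_part_general.{u} {K : Type u} [Field K] [CharZero K] {p n : ℕ}
    (hp : p.Prime) (hodd : Odd p) (hdiv : ¬p ∣ n / p) (hexc : ¬(p = 3 ∧ 3 ∣ n)) :
    ∃ V : FDRep K (alternatingGroup (Fin n)),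
      Simple V ∧ p ∣ Module.finrank K V ∧ ¬p ^ 2 ∣ Module.finrank K V := by
  have hpn : p ≤ n := by
    by_contra! h
    simp [Nat.div_eq_of_lt h] at hdiv
  have : NeZero n := ⟨(hp.pos.trans_le hpn).ne'⟩
  have : Nontrivial (Fin n) := Fin.nontrivial_iff_two_le.2 (hp.two_le.trans hpn)
  by_cases hn : p ∣ n
  · have hp3 : p ≠ 3 := fun h => hexc ⟨h, h ▸ hn⟩
    have hp5 : 5 ≤ p := hp.five_le_of_ne_two_of_ne_three (hodd.ne_two_of_dvd_nat dvd_rfl) hp3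
    have hrank := two_mul_finrank_twoRowSubrepresentation (K := K) (α := Fin n)
      (by rw [Fintype.card_fin]; omega)
    rw [Fintype.card_fin] at hrank
    exact exists_simple_fdRep_alternatingGroup
      (isIrreducible_twoRowSubrepresentation (by rw [Fintype.card_fin]; omega)) hp hodd
      (dvd_and_not_sq_dvd_of_two_mul_eq hp hodd hp3 (by omega) hn hdiv hrank)
  · have hmod : n % p < n := (Nat.mod_lt n hp.pos).trans_le hpn
    refine exists_simple_fdRep_alternatingGroup (isIrreducible_alternatingFormRep_standardRep
      (K := K) (α := Fin n) (by rwa [Fintype.card_fin])) hp hodd ?_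
    rw [finrank_alternatingMap, finrank_standardModule, Fintype.card_fin]
    exact dvd_and_not_sq_dvd_choose_pred_mod hp hn hdiv

/-- Lemma 4.2 of the paper. Let `p` be an odd prime and `p ≤ n < p²`, `n > 4`,
`(n, p) ≠ (6, 3)`. Then the alternating group `A_n` has an irreducible complex
character whose degree has `p`-part exactly `p`, i.e. the degree is divisible by `p`
but not by `p²`. -/
theorem alternating_char_p_part (p n : ℕ) (hp : p.Prime) (hodd : Odd p)
    (hpn : p ≤ n) (hnp2 : n < p ^ 2) (hn4 : 4 < n) (hexc : ¬(n = 6 ∧ p = 3)) :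
    ∃ V : FDRep ℂ ↥(alternatingGroup (Fin n)), Simple V ∧
      p ∣ Module.finrank ℂ V ∧ ¬ (p ^ 2 ∣ Module.finrank ℂ V) := by
  have hdiv : n / p < p := Nat.div_lt_of_lt_mul (pow_two p ▸ hnp2)
  exact alternating_char_p_part_general hp hodd
    (Nat.not_dvd_of_pos_of_lt (Nat.div_pos hpn hp.pos) hdiv) fun ⟨hp3, hn3⟩ => by subst hp3; omega
end

section
/- Let p be a prime, V a finite-dimensional vector space over the field F_p with p elements, and G a subgroup of GL(V) such that: V is an irreducible F_pG-module (V ≠ 0 and the only G-invariant subspaces of V are 0 and V); p divides |G|; every G-orbit on V has size coprime to p (G is p-exceptional); and G has no proper normal subgroup of index coprime to p (G = O^{p'}(G)). Suppose V = V_1 ⊕ ⋯ ⊕ V_n with n > 1 is a direct sum decomposition into nonzero subspaces that G permutes (an imprimitivity decomposition). Then the stabilizer G_{V_1} of V_1 acts transitively on V_1 \ {0}, and the permutation group induced by G on Ω = {V_1, …, V_n} is primitive, has order divisible by p, and all of its orbits on the power set of Ω have size coprime to p (i.e. it is a primitive p-concealed subgroup of Sym(Ω)). -/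
open Pointwise MulAction

/-- An action of `G` on `X` is primitive if it is transitive and its only blocks are
the trivial ones (the subsingletons and the whole set). -/
def IsPrimitiveAction (G X : Type*) [Group G] [MulAction G X] : Prop :=
  MulAction.IsPretransitive G X ∧
    ∀ B : Set X, MulAction.IsBlock G B → MulAction.IsTrivialBlock B

/-!
Since `G = O^{p'}(G)` acts nontrivially on the set `Ω` of summands, `p` divides the order of the
induced permutation group, and Cauchy's theorem gives a cyclic subgroup with an orbit `S ⊆ Ω` of
size `p`. The stabilizer of `S` is transitive on `S`, so the stabilizer of the pair `(S, t)` with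
`t ∈ S` has index divisible by `p`.

If `x, y ∈ V₁ \ {0}` were in different `G`-orbits, then the vector with a conjugate of `x` at `t`,
conjugates of `y` on `S \ {t}` and `0` elsewhere would have its stabilizer inside that of `(S, t)`,
hence an orbit of size divisible by `p`. This proves transitivity on `V₁ \ {0}`. Summing over the
translates of a block `B ≠ Ω` gives a coarser imprimitivity decomposition, to which transitivity
applies as well; but `G` preserves the number of nonzero components of a vector, so `B` cannot have
two points, and `Ω` is primitive. Finally, the stabilizer of a vector with support `s ⊆ Ω`
stabilizes `s`, so the orbit of `s` has size coprime to `p`.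
-/

/-- `G = O^{p'}(G)`: the only normal subgroup of index coprime to `p` is `G` itself. Subgroups of
infinite index have `index = 0`, which is not coprime to a prime, so they are not constrained. -/
def IsPPrimePerfect (p : ℕ) (G : Type*) [Group G] : Prop :=
  ∀ N : Subgroup G, N.Normal → N.index.Coprime p → N = ⊤

/-- All orbits of `G` on `X` have size coprime to `p`. For `X` a module this is the orbit condition
in `p`-exceptionality, for `X = Set Ω` the one in `p`-concealedness. An infinite orbit has
`Nat.card` equal to `0`, so for prime `p` all orbits are finite. -/
def HasCoprimeOrbits (p : ℕ) (G X : Type*) [Group G] [MulAction G X] : Prop :=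
  ∀ x : X, (Nat.card (orbit G x)).Coprime p

section GroupActions

variable {p : ℕ} {G X Y : Type*} [Group G] [MulAction G X] [MulAction G Y]

theorem HasCoprimeOrbits.coprime_index_stabilizer (h : HasCoprimeOrbits p G X) (x : X) :
    (stabilizer G x).index.Coprime p := by
  rw [index_stabilizer, ← Nat.card_coe_set_eq]
  exact h x

theorem HasCoprimeOrbits.of_forall_exists_stabilizer_le (h : HasCoprimeOrbits p G X)
    (hle : ∀ y : Y, ∃ x : X, stabilizer G x ≤ stabilizer G y) : HasCoprimeOrbits p G Y := by
  intro y
  obtain ⟨x, hxy⟩ := hle y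
  rw [Nat.card_coe_set_eq, ← index_stabilizer]
  exact (h.coprime_index_stabilizer x).coprime_dvd_left (Subgroup.index_dvd_of_le hxy)

theorem ne_zero_of_mem_orbit {A : Type*} [AddMonoid A] [DistribMulAction G A] {x y : A}
    (hx0 : x ≠ 0) (hy : y ∈ orbit G x) : y ≠ 0 := by
  obtain ⟨g, rfl⟩ := hy
  exact (smul_ne_zero_iff_ne g).2 hx0

theorem orbit_range_toPermHom_set (s : Set X) :
    orbit (toPermHom G X).range s = orbit G s := by
  ext s'
  constructor
  · rintro ⟨⟨_, g, rfl⟩, rfl⟩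
    exact ⟨g, rfl⟩
  · rintro ⟨g, rfl⟩
    exact ⟨⟨toPermHom G X g, g, rfl⟩, rfl⟩

theorem isPreprimitive_range_toPermHom [IsPreprimitive G X] :
    IsPreprimitive (toPermHom G X).range X :=
  let idEquivariant : X →ₑ[(toPermHom G X).rangeRestrict] X := ⟨id, fun _ _ => rfl⟩
  IsPreprimitive.of_surjective (f := idEquivariant) Function.surjective_id

theorem toPermHom_ne_one [IsPretransitive G X] [Nontrivial X] : toPermHom G X ≠ 1 := by
  intro htrivial
  obtain ⟨x, y, hxy⟩ := exists_pair_ne X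
  obtain ⟨g, rfl⟩ := exists_smul_eq G x y
  exact hxy (congrArg (fun φ : G →* Equiv.Perm X => φ g x) htrivial).symm

theorem nontrivial_orbit_set [IsPretransitive G X] {B : Set X} (hB : B.Nonempty)
    (hne_univ : B ≠ Set.univ) : Nontrivial (orbit G B) := by
  obtain ⟨a, ha⟩ := hB
  obtain ⟨c, hc⟩ := (Set.ne_univ_iff_exists_notMem B).1 hne_univ
  obtain ⟨g, rfl⟩ := exists_smul_eq G a c
  refine ⟨⟨B, mem_orbit_self B⟩, ⟨g • B, mem_orbit B g⟩, fun heq => hc ?_⟩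
  have hBg : B = g • B := congrArg Subtype.val heq
  exact hBg ▸ Set.smul_mem_smul_set ha

theorem IsPPrimePerfect.dvd_card_range [Fact p.Prime] (hG : IsPPrimePerfect p G) {H : Type*}
    [Group H] {φ : G →* H} (hφ : φ ≠ 1) : p ∣ Nat.card φ.range := by
  by_contra hndvd
  have hcop : φ.ker.index.Coprime p := by
    rw [Subgroup.index_ker]
    exact ((Nat.Prime.coprime_iff_not_dvd Fact.out).2 hndvd).symm
  exact hφ ((MonoidHom.ker_eq_top_iff).1 (hG φ.ker inferInstance hcop))

theorem exists_card_orbit_zpowers_eq [Fact p.Prime] [Finite X]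
    (hp : p ∣ Nat.card (toPermHom G X).range) :
    ∃ (g : G) (x : X), Nat.card (orbit (Subgroup.zpowers g) x) = p := by
  obtain ⟨σ, horder⟩ := exists_prime_orderOf_dvd_card' p hp
  obtain ⟨g, hg⟩ := MonoidHom.mem_range.1 σ.2
  rw [← Subgroup.orderOf_coe, ← hg, orderOf_eq_prime_iff, ← map_pow] at horder
  obtain ⟨hpow, hne⟩ := horder
  obtain ⟨x, hx⟩ : ∃ x : X, g • x ≠ x := by
    by_contra! hfix
    exact hne (Equiv.ext hfix)
  have hperiodic : Function.IsPeriodicPt (g • ·) p x := by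
    rw [Function.IsPeriodicPt, smul_iterate]
    exact congrArg (fun σ : Equiv.Perm X => σ x) hpow
  have := Fintype.ofFinite (orbit (Subgroup.zpowers g) x)
  refine ⟨g, x, ?_⟩
  rw [Nat.card_eq_fintype_card, ← minimalPeriod_eq_card]
  exact Function.minimalPeriod_eq_prime hperiodic hx

theorem orbit_stabilizer_orbit (H : Subgroup G) (x : X) :
    orbit (stabilizer G (orbit H x)) x = orbit H x := by
  apply Set.Subset.antisymm
  · rintro _ ⟨⟨g, hg⟩, rfl⟩
    exact (mem_stabilizer_set.1 hg x).2 (mem_orbit_self x)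
  · rintro _ ⟨h, rfl⟩
    exact ⟨⟨h, smul_orbit h x⟩, rfl⟩

theorem card_orbit_dvd_index_stabilizer_orbit_inf_stabilizer (H : Subgroup G) (x : X) :
    Nat.card (orbit H x) ∣ (stabilizer G (orbit H x) ⊓ stabilizer G x).index := by
  set A := stabilizer G (orbit H x)
  have hrel : (A ⊓ stabilizer G x).relIndex A = Nat.card (orbit H x) := calc
    (A ⊓ stabilizer G x).relIndex A = (stabilizer A x).index := Subgroup.inf_relIndex_left _ _
    _ = Nat.card (orbit H x) := by
      rw [index_stabilizer, orbit_stabilizer_orbit, Nat.card_coe_set_eq]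
  exact ⟨A.index, by rw [← hrel, Subgroup.relIndex_mul_index inf_le_left]⟩

theorem IsPPrimePerfect.exists_dvd_index_stabilizer_inf_stabilizer [Fact p.Prime]
    (hG : IsPPrimePerfect p G) [IsPretransitive G X] [Nontrivial X] [Finite X] :
    ∃ (S : Set X) (t : X), t ∈ S ∧ p ∣ (stabilizer G S ⊓ stabilizer G t).index := by
  obtain ⟨g, t, hcard⟩ :=
    exists_card_orbit_zpowers_eq (hG.dvd_card_range (toPermHom_ne_one (G := G) (X := X)))
  refine ⟨orbit (Subgroup.zpowers g) t, t, mem_orbit_self t, ?_⟩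
  conv_lhs => rw [← hcard]
  exact card_orbit_dvd_index_stabilizer_orbit_inf_stabilizer _ t

end GroupActions

theorem iSupIndep_biSup_of_pairwise_disjoint {α ι κ : Type*} [CompleteLattice α]
    [IsModularLattice α] [IsCompactlyGenerated α] {f : ι → α} (hf : iSupIndep f) {s : κ → Set ι}
    (hs : Pairwise (Function.onFun Disjoint s)) : iSupIndep fun k => ⨆ i ∈ s k, f i := by
  intro k
  have hdisj : Disjoint (s k) (⋃ l ≠ k, s l) :=
    Set.disjoint_iUnion₂_right.2 fun l hl => hs hl.symm
  refine (hf.disjoint_biSup_biSup hdisj).mono_right (iSup₂_le fun l hl => ?_)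
  exact biSup_mono fun i hi => Set.mem_biUnion hl hi

theorem add_notMem_of_iSupIndep {R V ι : Type*} [Ring R] [AddCommGroup V] [Module R V]
    {W : ι → Submodule R V} (hW : iSupIndep W) {a b : ι} (hab : a ≠ b) {x y : V}
    (hx : x ∈ W a) (hx0 : x ≠ 0) (hy : y ∈ W b) (hy0 : y ≠ 0) (j : ι) : x + y ∉ W j := by
  intro hxy
  by_cases hjb : j = b
  · subst hjb
    have hxj : x ∈ W j := by simpa using (W j).sub_mem hxy hy
    exact hx0 (Submodule.disjoint_def.1 (hW.pairwiseDisjoint hab) x hx hxj)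
  · have hyaj : y ∈ ⨆ i ∈ ({a, j} : Set ι), W i := by
      rw [iSup_pair, ← add_sub_cancel_left x y]
      exact sub_mem (Submodule.mem_sup_right hxy) (Submodule.mem_sup_left hx)
    have hb : b ∉ ({a, j} : Set ι) := by simp [hab.symm, Ne.symm hjb]
    exact hy0 (Submodule.disjoint_def.1 (hW.disjoint_biSup hb) y hy hyaj)

/-- An independent family `W` of nonzero submodules that `G` permutes in accordance with a given
action on the index type: an imprimitivity decomposition of `⨆ i, W i`. -/
structure IsImprimitivitySystem (G : Type*) {R V ι : Type*} [Group G] [Ring R] [AddCommGroup V]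
    [Module R V] [DistribMulAction G V] [SMulCommClass G R V] [MulAction G ι]
    (W : ι → Submodule R V) : Prop where
  ne_bot : ∀ i, W i ≠ ⊥
  iSupIndep : iSupIndep W
  smul_eq : ∀ (g : G) i, g • W i = W (g • i)

section ImprimitivitySystems

variable {p : ℕ} {G R V ι : Type*} [Group G] [Ring R] [AddCommGroup V] [Module R V]
  [DistribMulAction G V] [SMulCommClass G R V] {W : ι → Submodule R V}

theorem exists_mulAction_isImprimitivitySystem (hne : ∀ i, W i ≠ ⊥) (hind : iSupIndep W)
    (hperm : ∀ (g : G) i, ∃ j, g • W i = W j) :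
    ∃ _ : MulAction G ι, IsImprimitivitySystem G W := by
  have hinj : Function.Injective W := hind.injective hne
  choose f hf using hperm
  let action : MulAction G ι :=
    { smul := f
      one_smul := fun i => hinj ((hf 1 i).symm.trans (one_smul G (W i)))
      mul_smul := fun g h i => hinj <| by
        change W (f (g * h) i) = W (f g (f h i))
        rw [← hf, ← hf, ← hf, mul_smul] }
  exact ⟨action, hne, hind, hf⟩

namespace IsImprimitivitySystem

variable [MulAction G ι]

theorem smul_mem (hW : IsImprimitivitySystem G W) (g : G) {i : ι} {x : V} (hx : x ∈ W i) :
    g • x ∈ W (g • i) :=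
  hW.smul_eq g i ▸ Submodule.smul_mem_pointwise_smul x g (W i) hx

theorem smul_index_eq (hW : IsImprimitivitySystem G W) {g : G} {i j : ι} {x : V}
    (hx : x ∈ W i) (hgx : g • x ∈ W j) (hgx0 : g • x ≠ 0) : g • i = j := by
  by_contra hij
  exact hgx0 (Submodule.disjoint_def.1 (hW.iSupIndep.pairwiseDisjoint hij) _ (hW.smul_mem g hx) hgx)

theorem exists_mem_orbit [IsPretransitive G ι] (hW : IsImprimitivitySystem G W) {i : ι} {x : V}
    (hx : x ∈ W i) (j : ι) : ∃ y ∈ orbit G x, y ∈ W j := by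
  obtain ⟨g, rfl⟩ := exists_smul_eq G i j
  exact ⟨g • x, mem_orbit x g, hW.smul_mem g hx⟩

theorem smul_biSup (hW : IsImprimitivitySystem G W) (g : G) (s : Set ι) :
    g • ⨆ i ∈ s, W i = ⨆ i ∈ g • s, W i := by
  simp only [Submodule.smul_iSup', hW.smul_eq, ← Set.image_smul, iSup_image]

theorem isPretransitive (hW : IsImprimitivitySystem G W)
    (hirr : ∀ U : Submodule R V, (∀ g : G, g • U ≤ U) → U = ⊥ ∨ U = ⊤) :
    IsPretransitive G ι := by
  refine ⟨fun i j => ?_⟩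
  set U : Submodule R V := ⨆ k ∈ orbit G i, W k with hU
  have hWi : W i ≤ U := le_biSup W (mem_orbit_self i)
  have hinvariant (g : G) : g • U ≤ U := by
    rw [hU, hW.smul_biSup, smul_orbit]
  have htop : U = ⊤ :=
    (hirr U hinvariant).resolve_left fun hbot => hW.ne_bot i (le_bot_iff.1 (hbot ▸ hWi))
  exact hW.iSupIndep.mem_of_biSup_eq_top htop (hW.ne_bot j)

section VectorStabilizers

variable [Fintype ι] {u : ι → V}

theorem smul_apply_of_mem_stabilizer_sum (hW : IsImprimitivitySystem G W) (hu : ∀ i, u i ∈ W i)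
    {g : G} (hg : g ∈ stabilizer G (∑ i, u i)) (i : ι) : g • u i = u (g • i) := by
  have hsum : ∑ j, g • u (g⁻¹ • j) = ∑ j, u j := calc
    ∑ j, g • u (g⁻¹ • j) = ∑ j, g • u j :=
      Equiv.sum_comp (MulAction.toPerm g⁻¹) fun j => g • u j
    _ = g • ∑ j, u j := Finset.smul_sum.symm
    _ = ∑ j, u j := hg
  have hmem (j : ι) : g • u (g⁻¹ • j) ∈ W j := by
    simpa only [smul_inv_smul] using hW.smul_mem g (hu (g⁻¹ • j))
  have hcomponent := (iSupIndep_iff_finsetSum_eq_imp_eq W).1 hW.iSupIndep Finset.univ _ u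
    (fun j _ => ⟨hmem j, hu j⟩) hsum (g • i) (Finset.mem_univ _)
  simpa only [inv_smul_smul] using hcomponent

theorem stabilizer_sum_le_stabilizer_support (hW : IsImprimitivitySystem G W)
    (hu : ∀ i, u i ∈ W i) : stabilizer G (∑ i, u i) ≤ stabilizer G (Function.support u) := by
  intro g hg
  refine mem_stabilizer_set.2 fun i => ?_
  rw [Function.mem_support, Function.mem_support, ← hW.smul_apply_of_mem_stabilizer_sum hu hg,
    smul_ne_zero_iff_ne]

end VectorStabilizers

theorem exists_stabilizer_le_stabilizer_set [Finite ι] (hW : IsImprimitivitySystem G W)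
    (s : Set ι) : ∃ v : V, stabilizer G v ≤ stabilizer G s := by
  have := Fintype.ofFinite ι
  choose x hx hx0 using fun i => Submodule.exists_mem_ne_zero_of_ne_bot (hW.ne_bot i)
  let u : ι → V := s.indicator x
  have hu (i : ι) : u i ∈ W i := by
    by_cases hi : i ∈ s <;> simp [u, hi, hx i]
  have hsupport : Function.support u = s := by
    simp [u, Function.support, hx0]
  exact ⟨∑ i, u i, hsupport ▸ hW.stabilizer_sum_le_stabilizer_support hu⟩

theorem exists_stabilizer_le_stabilizer_set_inf_stabilizer [Finite ι] [IsPretransitive G ι]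
    (hW : IsImprimitivitySystem G W) {i : ι} {x y : V} (hx : x ∈ W i) (hx0 : x ≠ 0)
    (hy : y ∈ W i) (hy0 : y ≠ 0) (hxy : y ∉ orbit G x) {S : Set ι} {t : ι} (ht : t ∈ S) :
    ∃ v : V, stabilizer G v ≤ stabilizer G S ⊓ stabilizer G t := by
  classical
  have := Fintype.ofFinite ι
  choose x' hx' hx'W using hW.exists_mem_orbit hx
  choose y' hy' hy'W using hW.exists_mem_orbit hy
  have hx'0 (j : ι) : x' j ≠ 0 := ne_zero_of_mem_orbit hx0 (hx' j)
  have hy'0 (j : ι) : y' j ≠ 0 := ne_zero_of_mem_orbit hy0 (hy' j)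
  let u : ι → V := fun j => if j = t then x' j else if j ∈ S then y' j else 0
  have hu (j : ι) : u j ∈ W j := by
    unfold u
    split_ifs <;> simp [hx'W, hy'W]
  have hsupport : Function.support u = S := by
    ext j
    by_cases hjt : j = t <;> by_cases hjS : j ∈ S <;> simp_all [u]
  have hS : stabilizer G (∑ j, u j) ≤ stabilizer G S :=
    hsupport ▸ hW.stabilizer_sum_le_stabilizer_support hu
  refine ⟨∑ j, u j, le_inf hS fun g hg => ?_⟩
  by_contra hgt
  have hgtS : g • t ∈ S := (mem_stabilizer_set.1 (hS hg) t).2 ht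
  have hconj : g • x' t = y' (g • t) := by
    simpa [u, hgtS, show g • t ≠ t from hgt] using hW.smul_apply_of_mem_stabilizer_sum hu hg t
  refine hxy ?_
  rw [← orbit_eq_iff.2 (hx' t), ← orbit_smul g, hconj, orbit_eq_iff.2 (hy' _)]
  exact mem_orbit_self y

theorem exists_smul_eq_of_mem [Fact p.Prime] [Finite ι] [Nontrivial ι] [IsPretransitive G ι]
    (hW : IsImprimitivitySystem G W) (hG : IsPPrimePerfect p G) (hV : HasCoprimeOrbits p G V)
    {i : ι} {x y : V} (hx : x ∈ W i) (hx0 : x ≠ 0) (hy : y ∈ W i) (hy0 : y ≠ 0) :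
    ∃ g : G, g • x = y := by
  by_contra hxy
  obtain ⟨S, t, ht, hdvd⟩ := hG.exists_dvd_index_stabilizer_inf_stabilizer (X := ι)
  obtain ⟨v, hv⟩ := hW.exists_stabilizer_le_stabilizer_set_inf_stabilizer hx hx0 hy hy0 hxy ht
  exact (Nat.Prime.coprime_iff_not_dvd Fact.out).1 (hV.coprime_index_stabilizer v).symm
    (hdvd.trans (Subgroup.index_dvd_of_le hv))

theorem biSup_orbit_of_isBlock (hW : IsImprimitivitySystem G W) {B : Set ι} (hB : IsBlock G B)
    (hBne : B.Nonempty) :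
    IsImprimitivitySystem G fun C : orbit G B => ⨆ i ∈ (C : Set ι), W i where
  ne_bot := by
    rintro ⟨_, g, rfl⟩ hbot
    obtain ⟨i, hi⟩ := hBne.smul_set (a := g)
    exact hW.ne_bot i (le_bot_iff.1 (hbot ▸ le_biSup W hi))
  iSupIndep := by
    refine iSupIndep_biSup_of_pairwise_disjoint hW.iSupIndep ?_
    rintro ⟨_, g, rfl⟩ ⟨_, h, rfl⟩ hne
    exact hB fun heq => hne (Subtype.ext heq)
  smul_eq g C := hW.smul_biSup g C

theorem isPreprimitive [Fact p.Prime] [Finite ι] [IsPretransitive G ι]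
    (hW : IsImprimitivitySystem G W) (hG : IsPPrimePerfect p G) (hV : HasCoprimeOrbits p G V) :
    IsPreprimitive G ι := by
  refine ⟨fun {B} hB => ?_⟩
  by_contra hnontrivial
  rw [IsTrivialBlock, not_or, Set.not_subsingleton_iff] at hnontrivial
  obtain ⟨⟨a, ha, b, hb, hab⟩, hne_univ⟩ := hnontrivial
  have : Nontrivial (orbit G B) := nontrivial_orbit_set ⟨a, ha⟩ hne_univ
  obtain ⟨x, hx, hx0⟩ := Submodule.exists_mem_ne_zero_of_ne_bot (hW.ne_bot a)
  obtain ⟨y, hy, hy0⟩ := Submodule.exists_mem_ne_zero_of_ne_bot (hW.ne_bot b)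
  have hxB : x ∈ ⨆ i ∈ B, W i := le_biSup W ha hx
  have hyB : y ∈ ⨆ i ∈ B, W i := le_biSup W hb hy
  have hxy (j : ι) : x + y ∉ W j := add_notMem_of_iSupIndep hW.iSupIndep hab hx hx0 hy hy0 j
  obtain ⟨g, hg⟩ := (hW.biSup_orbit_of_isBlock hB ⟨a, ha⟩).exists_smul_eq_of_mem hG hV
    (i := ⟨B, mem_orbit_self B⟩) hxB hx0 (add_mem hxB hyB) fun h0 => hxy a (h0 ▸ zero_mem _)
  exact hxy (g • a) (hg ▸ hW.smul_mem g hx)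

end IsImprimitivitySystem

end ImprimitivitySystems

theorem orbit_linear_subgroup_eq {R V : Type*} [Ring R] [AddCommGroup V] [Module R V]
    (G : Subgroup ((V →ₗ[R] V)ˣ)) (v : V) :
    orbit G v = {w : V | ∃ g ∈ G, (g : V →ₗ[R] V) v = w} := by
  ext w
  exact ⟨fun ⟨g, hgv⟩ => ⟨g, g.2, hgv⟩, fun ⟨g, hg, hgv⟩ => ⟨⟨g, hg⟩, hgv⟩⟩

theorem glpst_theorem3_general (p : ℕ) [Fact p.Prime] {R V ι : Type*} [Ring R] [AddCommGroup V]
    [Module R V] [Finite ι] [Nontrivial ι] (G : Subgroup ((V →ₗ[R] V)ˣ))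
    (hirr : ∀ U : Submodule R V,
      (∀ g ∈ G, ∀ v ∈ U, (g : V →ₗ[R] V) v ∈ U) → U = ⊥ ∨ U = ⊤)
    (hV : HasCoprimeOrbits p G V) (hG : IsPPrimePerfect p G) (W : ι → Submodule R V)
    (hne : ∀ i, W i ≠ ⊥) (hind : iSupIndep W)
    (hperm : ∀ g ∈ G, ∀ i, ∃ j, (W i).map (g : V →ₗ[R] V) = W j) :
    (∀ i, ∀ v ∈ W i, v ≠ 0 → ∀ w ∈ W i, w ≠ 0 →
      ∃ g ∈ G, (W i).map (g : V →ₗ[R] V) = W i ∧ (g : V →ₗ[R] V) v = w) ∧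
    ∃ Q : Subgroup (Equiv.Perm ι),
      (∀ σ : Equiv.Perm ι, σ ∈ Q ↔ ∃ g ∈ G, ∀ i, (W i).map (g : V →ₗ[R] V) = W (σ i)) ∧
      p ∣ Nat.card Q ∧ IsPrimitiveAction Q ι ∧ HasCoprimeOrbits p Q (Set ι) := by
  obtain ⟨_, hW⟩ := exists_mulAction_isImprimitivitySystem (G := G) hne hind
    fun g => hperm g g.2
  have := hW.isPretransitive fun U hU => hirr U fun g hg v hv =>
    hU ⟨g, hg⟩ (Submodule.smul_mem_pointwise_smul v (⟨g, hg⟩ : G) U hv)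
  have := hW.isPreprimitive hG hV
  have hprim := isPreprimitive_range_toPermHom (G := G) (X := ι)
  refine ⟨fun i v hv hv0 w hw hw0 => ?_, (toPermHom G ι).range, fun σ => ⟨?_, ?_⟩,
    hG.dvd_card_range toPermHom_ne_one,
    ⟨hprim.toIsPretransitive, fun B hB => hprim.isTrivialBlock_of_isBlock hB⟩, fun s => ?_⟩
  · obtain ⟨g, rfl⟩ := hW.exists_smul_eq_of_mem hG hV hv hv0 hw hw0
    refine ⟨g, g.2, ?_, rfl⟩
    exact (hW.smul_eq g i).trans (congrArg W (hW.smul_index_eq hv hw hw0))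
  · rintro ⟨g, rfl⟩
    exact ⟨g, g.2, hW.smul_eq g⟩
  · rintro ⟨g, hg, hσ⟩
    refine ⟨⟨g, hg⟩, Equiv.ext fun i => hind.injective hne ?_⟩
    exact (hW.smul_eq ⟨g, hg⟩ i).symm.trans (hσ i)
  · rw [orbit_range_toPermHom_set]
    exact hV.of_forall_exists_stabilizer_le hW.exists_stabilizer_le_stabilizer_set s

/-- Theorem 2.3 of the paper (Theorem 3 of Giudici–Liebeck–Praeger–Saxl–Tiep).
Let `G ≤ GL(V)`, `V` a finite-dimensional vector space over `𝔽_p`, be irreducible and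
`p`-exceptional with `G = O^{p'}(G)`, and let `V = V₁ ⊕ ⋯ ⊕ V_m` (`m > 1`) be an
imprimitivity decomposition for `G`. Then the stabilizer of `V₁` is transitive on
`V₁ \ {0}`, and the permutation group `Q` induced by `G` on `{V₁, …, V_m}` is
primitive and `p`-concealed. -/
theorem glpst_theorem3 (p : ℕ) [Fact p.Prime]
    (V : Type*) [AddCommGroup V] [Module (ZMod p) V] [FiniteDimensional (ZMod p) V]
    (G : Subgroup ((V →ₗ[ZMod p] V)ˣ))
    (hV : Nontrivial V)
    (hirr : ∀ W : Submodule (ZMod p) V,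
      (∀ g ∈ G, ∀ w ∈ W, (g : V →ₗ[ZMod p] V) w ∈ W) → W = ⊥ ∨ W = ⊤)
    (hdvd : p ∣ Nat.card G)
    (hexc : ∀ v : V, (Nat.card {w : V | ∃ g ∈ G, (g : V →ₗ[ZMod p] V) v = w}).Coprime p)
    (hOp' : ∀ N : Subgroup ↥G, N.Normal → N.index.Coprime p → N = ⊤)
    (m : ℕ) (hm : 1 < m) (Vsub : Fin m → Submodule (ZMod p) V)
    (hne : ∀ i, Vsub i ≠ ⊥)
    (hind : iSupIndep Vsub) (hspan : ⨆ i, Vsub i = ⊤)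
    (hperm : ∀ g ∈ G, ∀ i, ∃ j, (Vsub i).map (g : V →ₗ[ZMod p] V) = Vsub j) :
    -- the stabilizer of `V₁` (of each `Vᵢ`) is transitive on the nonzero vectors
    (∀ i : Fin m, ∀ v ∈ Vsub i, v ≠ 0 → ∀ w ∈ Vsub i, w ≠ 0 →
      ∃ g ∈ G, (Vsub i).map (g : V →ₗ[ZMod p] V) = Vsub i ∧
        (g : V →ₗ[ZMod p] V) v = w) ∧
    -- the induced permutation group on `Ω = {V₁, …, V_m}` is primitive and
    -- `p`-concealed
    ∃ Q : Subgroup (Equiv.Perm (Fin m)),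
      (∀ σ : Equiv.Perm (Fin m), σ ∈ Q ↔
        ∃ g ∈ G, ∀ i, (Vsub i).map (g : V →ₗ[ZMod p] V) = Vsub (σ i)) ∧
      p ∣ Nat.card Q ∧
      IsPrimitiveAction Q (Fin m) ∧
      ∀ s : Set (Fin m), (Nat.card (MulAction.orbit Q s)).Coprime p := by
  have := Fin.nontrivial_iff_two_le.2 hm
  exact glpst_theorem3_general p G hirr (fun v => orbit_linear_subgroup_eq G v ▸ hexc v) hOp'
    Vsub hne hind hperm
end

section
/- Let p be a prime, V a finite perfect group, and N a normal abelian p-subgroup of V. Let λ : N → ℂ^× be a group homomorphism that is V-invariant, i.e. λ(v n v^{-1}) = λ(n) for all v ∈ V and n ∈ N, and suppose λ extends to a group homomorphism R → ℂ^× for some Sylow p-subgroup R of V. Then λ is the trivial homomorphism. -/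
/-!
Transfer the extension `φ : H → A` of `lam` to a homomorphism `V → A`. An element `n` of `N` fixes
every coset of `H`, so its transfer is the product of the `φ (t⁻¹ * n * t)` over coset
representatives `t`; by invariance every factor is `lam n`, and the transfer of `n` is
`lam n ^ H.index`. As `V` is perfect the transfer is trivial, so `lam n` is killed both by the index
of `H` and by the order of `n`, which are coprime when `H` is a Sylow `p`-subgroup and `N` a
`p`-group.
-/

section Transfer

variable {G A : Type*} [Group G] [CommGroup A] {H : Subgroup G}

theorem smul_quotient_eq_self_of_mem_normalCore {g : G} (hg : g ∈ H.normalCore) (q : G ⧸ H) :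
    g • q = q := by
  rw [Subgroup.normalCore_eq_ker, MonoidHom.mem_ker] at hg
  exact DFunLike.congr_fun hg q

theorem coe_smul_leftQuotientEquiv_of_mem_normalCore {g : G} (hg : g ∈ H.normalCore)
    (T : H.LeftTransversal) (q : G ⧸ H) :
    ((g • T).2.leftQuotientEquiv q : G) = g * T.2.leftQuotientEquiv q := by
  rw [Subgroup.smul_apply_eq_smul_apply_inv_smul,
    smul_quotient_eq_self_of_mem_normalCore (inv_mem hg), smul_eq_mul]

theorem transfer_eq_pow_index_of_forall_conj [H.FiniteIndex] (φ : H →* A) {g : G} {a : A}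
    (hg : g ∈ H.normalCore) (hφ : ∀ v : G, φ ⟨v * g * v⁻¹, hg v⟩ = a) :
    φ.transfer g = a ^ H.index := by
  let := H.fintypeQuotientOfFiniteIndex
  let T : H.LeftTransversal := default
  calc
    φ.transfer g = ∏ q : G ⧸ H, φ ⟨_, _⟩ := MonoidHom.transfer_def φ T g
    _ = ∏ _q : G ⧸ H, a := by
      refine Fintype.prod_congr _ _ fun q ↦ ?_
      rw [← hφ (T.2.leftQuotientEquiv q : G)⁻¹]
      congr 2
      rw [coe_smul_leftQuotientEquiv_of_mem_normalCore hg, inv_inv, mul_assoc]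
    _ = a ^ H.index := by
      rw [Finset.prod_const, Finset.card_univ, H.index_eq_card, Nat.card_eq_fintype_card]

end Transfer

theorem monoidHom_eq_one_of_isPerfect {G A : Type*} [Group G] [Group.IsPerfect G] [CommGroup A]
    (f : G →* A) : f = 1 :=
  MonoidHom.ext fun _ ↦ Abelianization.commutator_subset_ker f Group.IsPerfect.mem_commutator

theorem invariant_character_pow_index_eq_one
    {V A : Type*} [Group V] [Group.IsPerfect V] [CommGroup A]
    {N H : Subgroup V} [hN : N.Normal] [H.FiniteIndex] (hNH : N ≤ H) (lam : N →* A)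
    (hinv : ∀ (v : V) (n : N), lam ⟨v * n * v⁻¹, hN.conj_mem n n.2 v⟩ = lam n)
    (φ : H →* A) (hφ : ∀ n : N, φ ⟨n, hNH n.2⟩ = lam n) (n : N) :
    lam n ^ H.index = 1 := by
  have hn : (n : V) ∈ H.normalCore := Subgroup.normal_le_normalCore.mpr hNH n.2
  have hconj (v : V) : φ ⟨v * n * v⁻¹, hn v⟩ = lam n :=
    (hφ ⟨v * n * v⁻¹, hN.conj_mem n n.2 v⟩).trans (hinv v n)
  rw [← transfer_eq_pow_index_of_forall_conj φ hn hconj, monoidHom_eq_one_of_isPerfect φ.transfer,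
    MonoidHom.one_apply]

theorem invariant_linear_character_trivial_general
    {V A : Type*} [Group V] [Group.IsPerfect V] [CommGroup A]
    {N H : Subgroup V} [hN : N.Normal] [H.FiniteIndex] (hNH : N ≤ H) (lam : N →* A)
    (hinv : ∀ (v : V) (n : N), lam ⟨v * n * v⁻¹, hN.conj_mem n n.2 v⟩ = lam n)
    (φ : H →* A) (hφ : ∀ n : N, φ ⟨n, hNH n.2⟩ = lam n)
    (hcop : ∀ n : N, (orderOf n).Coprime H.index) : lam = 1 := by
  ext n
  have horder : lam n ^ orderOf n = 1 := by rw [← map_pow, pow_orderOf_eq_one, map_one]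
  have hindex : lam n ^ H.index = 1 := invariant_character_pow_index_eq_one hNH lam hinv φ hφ n
  simpa [(hcop n).gcd_eq_one] using pow_gcd_eq_one.mpr ⟨horder, hindex⟩

/-- Step 7 of the proof of the main theorem: if `V` is a finite perfect group, `N` a
normal abelian `p`-subgroup of `V`, and `λ : N → ℂˣ` a `V`-invariant linear character
of `N` that extends to some Sylow `p`-subgroup of `V`, then `λ` is trivial. -/
theorem invariant_linear_character_trivial (p : ℕ) (hp : p.Prime)
    (V : Type*) [Group V] [Finite V] (hperf : commutator V = ⊤)
    (N : Subgroup V) (hN : N.Normal) (hNab : ∀ a b : N, a * b = b * a)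
    (hNp : IsPGroup p N) (lam : N →* ℂˣ)
    (hinv : ∀ (v : V) (n : N), lam ⟨v * n * v⁻¹, hN.conj_mem n n.2 v⟩ = lam n)
    (hext : ∃ (R : Sylow p V) (hNR : N ≤ (R : Subgroup V)) (mu : (R : Subgroup V) →* ℂˣ),
      ∀ n : N, mu ⟨n, hNR n.2⟩ = lam n) :
    lam = 1 := by
  have : Fact p.Prime := ⟨hp⟩
  have : Group.IsPerfect V := ⟨hperf⟩
  obtain ⟨R, hNR, mu, hmu⟩ := hext
  exact invariant_linear_character_trivial_general hNR lam hinv mu hmu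
    (hNp.orderOf_coprime (hp.coprime_iff_not_dvd.mpr R.not_dvd_index))
end
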